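/- Let R be a valuation ring with fraction field K and valuation v, and let n be a natural number. For any n×n matrix g over K (indexed by Fin n ⊕ Unit, i.e. an (n+1)×(n+1) matrix), there exist invertible matrices k₁, k₂ ∈ GL(R) of the same size such that the bottom-right entry of k₁·g·k₂ has valuation equal to the supremum of the valuations of all the entries of g. -/

import Mathlib

open Matrix

/-- Supremum of the valuations of the entries of a matrix (over a nonempty finite index type). -/
noncomputable def Matrix.coeffsSup {R : Type*} [CommRing R] [IsDomain R] [ValuationRing R]
    {K : Type*} [Field K] [Algebra R K] [IsFractionRing R K]
    {m : Type*} [Fintype m] [Nonempty m] (g : Matrix m m K) : ValuationRing.ValueGroup R K :=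
  Finset.univ.sup' Finset.univ_nonempty
    (fun p : m × m => ValuationRing.valuation R K (g p.1 p.2))

section swap

variable {m n R S : Type*} [Fintype m] [DecidableEq m] [Fintype n] [DecidableEq n]

theorem swap_mul_mul_swap_apply [Semiring R] (g : Matrix m n R) (i₀ i : m) (j₀ j : n) :
    (swap R i₀ i * g * swap R j₀ j) i₀ j₀ = g i j := by
  rw [mul_swap_apply_left, swap_mul_apply_left]

theorem exists_generalLinearGroup_map_mul_mul_map_apply_eq [CommRing R] [CommRing S] (f : R →+* S)
    (g : Matrix m n S) (i₀ i : m) (j₀ j : n) :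
    ∃ (k₁ : GL m R) (k₂ : GL n R),
      ((GeneralLinearGroup.map f k₁).val * g * (GeneralLinearGroup.map f k₂).val) i₀ j₀ =
        g i j := by
  refine ⟨GeneralLinearGroup.swap R i₀ i, GeneralLinearGroup.swap R j₀ j, ?_⟩
  simp only [GeneralLinearGroup.map_swap, GeneralLinearGroup.val_swap, swap_mul_mul_swap_apply]

end swap

section ValuationRing

variable {R : Type*} [CommRing R] [IsDomain R] [ValuationRing R]
  {K : Type*} [Field K] [Algebra R K] [IsFractionRing R K]
  {m : Type*} [Fintype m] [Nonempty m]

theorem exists_valuation_apply_eq_coeffsSup (g : Matrix m m K) :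
    ∃ i j, ValuationRing.valuation R K (g i j) = coeffsSup (R := R) g := by
  obtain ⟨⟨i, j⟩, -, hij⟩ := Finset.exists_mem_eq_sup' Finset.univ_nonempty
    (fun p : m × m => ValuationRing.valuation R K (g p.1 p.2))
  exact ⟨i, j, hij.symm⟩

theorem exists_normalization0_general [DecidableEq m] (g : Matrix m m K) (i₀ j₀ : m) :
    ∃ k₁ k₂ : GL m R,
      ValuationRing.valuation R K
        (((GeneralLinearGroup.map (algebraMap R K) k₁).val * g *
          (GeneralLinearGroup.map (algebraMap R K) k₂).val) i₀ j₀) =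
      coeffsSup (R := R) g := by
  obtain ⟨i, j, hij⟩ := exists_valuation_apply_eq_coeffsSup (R := R) g
  obtain ⟨k₁, k₂, hk⟩ :=
    exists_generalLinearGroup_map_mul_mul_map_apply_eq (algebraMap R K) g i₀ i j₀ j
  exact ⟨k₁, k₂, by rw [hk, hij]⟩

end ValuationRing

/-- Let `R` be a valuation ring with fraction field `K` and valuation `v`.
For any matrix `g` over `K` indexed by `Fin n ⊕ Unit`, there are `k₁ k₂ ∈ GL(R)` such that
the bottom-right entry of `k₁ * g * k₂` has valuation equal to the supremum of the
valuations of all entries of `g`. -/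
theorem exists_normalization0 {R : Type*} [CommRing R] [IsDomain R] [ValuationRing R]
    {K : Type*} [Field K] [Algebra R K] [IsFractionRing R K]
    {n : ℕ} (g : Matrix (Fin n ⊕ Unit) (Fin n ⊕ Unit) K) :
    ∃ k₁ k₂ : GL (Fin n ⊕ Unit) R,
      ValuationRing.valuation R K
        ((((Matrix.GeneralLinearGroup.map (n := Fin n ⊕ Unit) (algebraMap R K)) k₁).val * g *
          ((Matrix.GeneralLinearGroup.map (n := Fin n ⊕ Unit) (algebraMap R K)) k₂).val)
          (Sum.inr ()) (Sum.inr ())) =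
      Matrix.coeffsSup (R := R) g :=
  exists_normalization0_general g (Sum.inr ()) (Sum.inr ())
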